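/- arXiv:2403.06043 — 2 statements merged into one kernel-verified Lean document; each statement's English description precedes it below -/
import Mathlib

section
/- Let 0 < p < 1 and β > 0. Let C_0 = {ω ∈ C([0,1], ℝ) : ω(0) = 0} be equipped with the supremum norm. Define J : C_0 → [0, ∞] by J(ω) = (β²/2)·∫_0^1 |ω(u)|^{−2p} du + (β/(1−p))·|ω(1)|^{1−p} when ∫_0^1 |ω(u)|^{−2p} du < ∞, and J(ω) = ∞ otherwise (with the convention |0|^{−2p} = ∞ in the integrand). Then J is lower semicontinuous on C_0. -/
open MeasureTheory Set ENNReal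

/-- The functional `J(ω) = (β²/2)∫_0^1 |ω(u)|^{-2p} du + (β/(1-p))|ω(1)|^{1-p}`
(with the convention `|0|^{-2p} = ∞`, so `J(ω) = ∞` when the integral diverges)
is lower semicontinuous on `C_0 = {ω ∈ C([0,1],ℝ) : ω(0) = 0}` with the topology of
uniform convergence. -/
theorem stmt6 (p β : ℝ) (hp0 : 0 < p) (hp1 : p < 1) (hβ : 0 < β) :
    LowerSemicontinuous
      (fun ω : {ω : C(Set.Icc (0:ℝ) 1, ℝ) // ω ⟨0, by norm_num⟩ = 0} =>
        ENNReal.ofReal (β ^ 2 / 2) *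
            (∫⁻ u : Set.Icc (0:ℝ) 1, (ENNReal.ofReal |ω.1 u|) ^ (-2 * p)) +
          ENNReal.ofReal ((β / (1 - p)) * |ω.1 ⟨1, by norm_num⟩| ^ (1 - p))) := by
  have hev : ∀ u : Set.Icc (0:ℝ) 1, Continuous
      (fun ω : {ω : C(Set.Icc (0:ℝ) 1, ℝ) // ω ⟨0, by norm_num⟩ = 0} => ω.1 u) :=
    fun u => (continuous_eval_const u).comp continuous_subtype_val
  apply LowerSemicontinuous.add
  · apply (ENNReal.continuous_const_mul ENNReal.ofReal_ne_top).comp_lowerSemicontinuous ?_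
      (fun a b h => mul_le_mul_right h _)
    rw [lowerSemicontinuous_iff_isClosed_preimage]
    intro y
    apply IsSeqClosed.isClosed
    intro ω ω₀ hω hlim
    simp only [mem_preimage, mem_Iic] at hω ⊢
    have hpt : ∀ u : Set.Icc (0:ℝ) 1, Filter.liminf
        (fun n => (ENNReal.ofReal |(ω n).1 u|) ^ (-2 * p)) Filter.atTop
        = (ENNReal.ofReal |ω₀.1 u|) ^ (-2 * p) := by
      intro u
      apply Filter.Tendsto.liminf_eq
      have hc := (ENNReal.continuous_rpow_const (y := -2 * p)).comp
        (ENNReal.continuous_ofReal.comp (hev u).abs)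
      exact (hc.tendsto ω₀).comp hlim
    calc
      _ = ∫⁻ u : Set.Icc (0:ℝ) 1, Filter.liminf
          (fun n => (ENNReal.ofReal |(ω n).1 u|) ^ (-2 * p)) Filter.atTop := by simp only [hpt]
      _ ≤ Filter.liminf (fun n => ∫⁻ u : Set.Icc (0:ℝ) 1,
          (ENNReal.ofReal |(ω n).1 u|) ^ (-2 * p)) Filter.atTop := by
        apply lintegral_liminf_le
        intro n
        exact (ENNReal.continuous_rpow_const.comp
          (ENNReal.continuous_ofReal.comp (ω n).1.continuous.abs)).measurable
      _ ≤ y := by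
        refine (Filter.liminf_le_liminf (Filter.Eventually.of_forall hω)).trans ?_
        simp
  · apply Continuous.lowerSemicontinuous
    apply ENNReal.continuous_ofReal.comp
    apply continuous_const.mul
    exact (hev _).abs.rpow_const (fun _ => Or.inr (by linarith))
end

section
/- Let 0 < x1 < x2 and y1 < y2 < 0. For γ ∈ ℝ define the linear functions b̃_X(x) = ((γ − y1)/(x2 − x1))·(x − x1) + y1 and b̃_Y(x) = ((y2 − y1)/(x2 − x1))·(x − x1) + y1. Then there exists γ0 > 0 such that for all γ ≥ γ0 and all x ∈ [x1, x2], b̃_X(x)² − b̃_Y(x)² + (b̃_X′ − b̃_Y′) ≥ 0, where b̃_X′ − b̃_Y′ = (γ − y2)/(x2 − x1) is the (constant) difference of slopes. (That is, for γ sufficiently large, b̃_X² − b̃_Y² + (γ − y2)/(x2 − x1) is nonnegative on [x1, x2].) -/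
open Set

/-- Lemma 6.3: for `γ` sufficiently large,
`b̃_X² - b̃_Y² + (b̃_X′ - b̃_Y′) ≥ 0` on `[x1, x2]`, where `b̃_X` is the line through
`(x1,y1)` and `(x2,γ)`, `b̃_Y` the line through `(x1,y1)` and `(x2,y2)`, and
`b̃_X′ - b̃_Y′ = (γ - y2)/(x2 - x1)`. -/
theorem stmt10 (x1 x2 y1 y2 : ℝ)
    (hx1 : 0 < x1) (hx12 : x1 < x2) (hy12 : y1 < y2) (hy2 : y2 < 0) :
    ∃ γ0 : ℝ, 0 < γ0 ∧ ∀ γ : ℝ, γ0 ≤ γ → ∀ x ∈ Set.Icc x1 x2,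
      0 ≤ ((γ - y1) / (x2 - x1) * (x - x1) + y1) ^ 2
          - ((y2 - y1) / (x2 - x1) * (x - x1) + y1) ^ 2
          + (γ - y2) / (x2 - x1) := by
  have hd : 0 < x2 - x1 := by linarith
  have hy1 : y1 < 0 := by linarith
  refine ⟨y1 ^ 2 * (x2 - x1), by nlinarith [mul_pos (pow_pos (neg_pos.2 hy1) 2) hd], ?_⟩
  intro γ hγ x hx
  obtain ⟨hxl, hxr⟩ := hx
  have h1 : y1 ^ 2 ≤ (γ - y2) / (x2 - x1) := by
    rw [le_div_iff₀ hd]; linarith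
  have h2 : 0 ≤ (y2 - y1) / (x2 - x1) * (x - x1) :=
    mul_nonneg (div_nonneg (by linarith) hd.le) (by linarith)
  have h3 : (y2 - y1) / (x2 - x1) * (x - x1) ≤ y2 - y1 := by
    rw [div_mul_eq_mul_div, div_le_iff₀ hd]
    exact mul_le_mul_of_nonneg_left (by linarith) (by linarith)
  have h4 : ((y2 - y1) / (x2 - x1) * (x - x1) + y1) ^ 2 ≤ y1 ^ 2 :=
    sq_le_sq' (by linarith) (by linarith) |>.trans_eq (neg_sq y1)
  have h5 := sq_nonneg ((γ - y1) / (x2 - x1) * (x - x1) + y1)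
  linarith
end
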